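/- The volume of the regular ideal octahedron, v_oct = 8Λ(π/4), satisfies |8Λ(π/4) − 3.663863| < 10⁻⁶. -/

import Mathlib

open Real MeasureTheory

/-- The Lobachevsky function `Λ(θ) = −∫₀^θ log |2 sin t| dt`. -/
noncomputable def lob (θ : ℝ) : ℝ := - ∫ t in (0:ℝ)..θ, Real.log |2 * Real.sin t|

open Filter Topology in
lemma aux_sin (t : ℝ) (h0 : 0 ≤ t) (h1 : t ≤ 1) (k : ℕ) :
    ∑ i ∈ Finset.range (2 * k), (-1 : ℝ) ^ i * (t ^ (2 * i + 1) / ((2 * i + 1).factorial : ℝ)) ≤ Real.sin t ∧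
    Real.sin t ≤ ∑ i ∈ Finset.range (2 * k + 1), (-1 : ℝ) ^ i * (t ^ (2 * i + 1) / ((2 * i + 1).factorial : ℝ)) := by
  have hs : Tendsto (fun n => ∑ i ∈ Finset.range n, (-1 : ℝ) ^ i * (t ^ (2 * i + 1) / ((2 * i + 1).factorial : ℝ)))
      atTop (𝓝 (Real.sin t)) := by
    have := (Real.hasSum_sin t).tendsto_sum_nat
    simpa only [mul_div_assoc] using this
  have ha : Antitone (fun i : ℕ => t ^ (2 * i + 1) / ((2 * i + 1).factorial : ℝ)) := by
    intro a b hab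
    have h2 : t ^ (2 * b + 1) ≤ t ^ (2 * a + 1) := pow_le_pow_of_le_one h0 h1 (by omega)
    have h3 : ((2 * a + 1).factorial : ℝ) ≤ ((2 * b + 1).factorial : ℝ) := by
      exact_mod_cast Nat.factorial_le (by omega)
    have h4 : (0 : ℝ) < ((2 * a + 1).factorial : ℝ) := by positivity
    exact div_le_div₀ (by positivity) h2 h4 h3
  exact ⟨ha.alternating_series_le_tendsto hs k, ha.tendsto_le_alternating_series hs k⟩

open Filter Topology in
lemma aux_cos (t : ℝ) (h0 : 0 ≤ t) (h1 : t ≤ 1) (k : ℕ) :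
    ∑ i ∈ Finset.range (2 * k), (-1 : ℝ) ^ i * (t ^ (2 * i) / ((2 * i).factorial : ℝ)) ≤ Real.cos t ∧
    Real.cos t ≤ ∑ i ∈ Finset.range (2 * k + 1), (-1 : ℝ) ^ i * (t ^ (2 * i) / ((2 * i).factorial : ℝ)) := by
  have hs : Tendsto (fun n => ∑ i ∈ Finset.range n, (-1 : ℝ) ^ i * (t ^ (2 * i) / ((2 * i).factorial : ℝ)))
      atTop (𝓝 (Real.cos t)) := by
    have := (Real.hasSum_cos t).tendsto_sum_nat
    simpa only [mul_div_assoc] using this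
  have ha : Antitone (fun i : ℕ => t ^ (2 * i) / ((2 * i).factorial : ℝ)) := by
    intro a b hab
    have h2 : t ^ (2 * b) ≤ t ^ (2 * a) := pow_le_pow_of_le_one h0 h1 (by omega)
    have h3 : ((2 * a).factorial : ℝ) ≤ ((2 * b).factorial : ℝ) := by
      exact_mod_cast Nat.factorial_le (by omega)
    have h4 : (0 : ℝ) < ((2 * a).factorial : ℝ) := by positivity
    exact div_le_div₀ (by positivity) h2 h4 h3
  exact ⟨ha.alternating_series_le_tendsto hs k, ha.tendsto_le_alternating_series hs k⟩

/-- truncated series of `t cot t` with a final correction -/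
noncomputable def qq (c t : ℝ) : ℝ :=
  1 - t ^ 2 / 3 - t ^ 4 / 45 - 2 * t ^ 6 / 945 - t ^ 8 / 4725 - 2 * t ^ 10 / 93555 - c * t ^ 12

/-- its antiderivative -/
noncomputable def qI (c t : ℝ) : ℝ :=
  t - t ^ 3 / 9 - t ^ 5 / 225 - 2 * t ^ 7 / 6615 - t ^ 9 / 42525 - 2 * t ^ 11 / 1029105
    - c * t ^ 13 / 13

lemma qq_nonneg (c t : ℝ) (hc : c ≤ 1 / 100) (h0 : 0 ≤ t) (h1 : t ≤ 4 / 5) : 0 ≤ qq c t := by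
  have h : ∀ n : ℕ, t ^ (n + 2) ≤ t ^ 2 := fun n =>
    pow_le_pow_of_le_one h0 (by linarith) (by omega)
  have h2 : t ^ 2 ≤ 16 / 25 := by nlinarith
  have h12 : c * t ^ 12 ≤ 1 / 100 * t ^ 12 := by gcongr
  have := h 2
  have := h 4
  have := h 6
  have := h 8
  have := h 10
  unfold qq
  norm_num at *
  linarith

lemma upper_cot (t : ℝ) (h0 : 0 ≤ t) (h1 : t ≤ 4 / 5) : t * Real.cos t ≤ qq 0 t * Real.sin t := by
  have hs := (aux_sin t h0 (by linarith) 4).1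
  have hc := (aux_cos t h0 (by linarith) 4).2
  have hq := qq_nonneg 0 t (by norm_num) h0 h1
  refine (mul_le_mul_of_nonneg_left hc h0).trans (le_trans ?_ (mul_le_mul_of_nonneg_left hs hq))
  rw [← sub_nonneg]
  simp only [Finset.sum_range_succ, Finset.sum_range_zero, Nat.factorial, qq]
  have hu : 0 ≤ t ^ 2 := by positivity
  have hu2 : t ^ 2 ≤ 16 / 25 := by nlinarith
  have key : 0 ≤ t ^ 13 * (((1382 / 638512875 - 271 / 1915538625 * t ^ 2)
     + (t ^ 2) ^ 2 * (2351 / 634023936000 - 9521 / 176536039680000 * t ^ 2))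
     + (t ^ 2) ^ 4 * (19 / 37759097376000 - 667 / 203899125830400000 * t ^ 2)
     + 1 / 61169737749120000 * (t ^ 2) ^ 6) := by
    have a1 : 0 ≤ 1382 / 638512875 - 271 / 1915538625 * t ^ 2 := by linarith
    have a2 : 0 ≤ 2351 / 634023936000 - 9521 / 176536039680000 * t ^ 2 := by linarith
    have a3 : 0 ≤ 19 / 37759097376000 - 667 / 203899125830400000 * t ^ 2 := by linarith
    positivity
  refine key.trans_eq ?_
  push_cast
  ring

lemma lower_cot (t : ℝ) (h0 : 0 ≤ t) (h1 : t ≤ 4 / 5) :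
    qq (24 / 10000000) t * Real.sin t ≤ t * Real.cos t := by
  have hs := (aux_sin t h0 (by linarith) 3).2
  have hc := (aux_cos t h0 (by linarith) 4).1
  have hq := qq_nonneg (24 / 10000000) t (by norm_num) h0 h1
  refine (mul_le_mul_of_nonneg_left hs hq).trans (le_trans ?_ (mul_le_mul_of_nonneg_left hc h0))
  rw [← sub_nonneg]
  simp only [Finset.sum_range_succ, Finset.sum_range_zero, Nat.factorial, qq]
  have hu : 0 ≤ t ^ 2 := by positivity
  have hu2 : t ^ 2 ≤ 16 / 25 := by nlinarith
  have key : 0 ≤ t ^ 13 * (((1504309 / 6385128750000 - 57625241 / 222899040000000 * t ^ 2)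
     + (t ^ 2) ^ 2 * (14266621 / 875674800000000 - 11646997 / 27583756200000000 * t ^ 2))
     + (t ^ 2) ^ 4 * (7418269 / 1213685272800000000 - 2064187 / 36410558184000000000 * t ^ 2)
     + 1 / 2594592000000000 * (t ^ 2) ^ 6) := by
    have a1 : 0 ≤ 1504309 / 6385128750000 - 57625241 / 222899040000000 * t ^ 2 := by linarith
    have a2 : 0 ≤ 14266621 / 875674800000000 - 11646997 / 27583756200000000 * t ^ 2 := by linarith
    have a3 : 0 ≤ 7418269 / 1213685272800000000 - 2064187 / 36410558184000000000 * t ^ 2 := by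
      linarith
    positivity
  refine key.trans_eq ?_
  push_cast
  ring

lemma pi4_le : Real.pi / 4 ≤ 4 / 5 := by linarith [Real.pi_lt_d20]

/-- the comparison primitive -/
noncomputable def gg (c t : ℝ) : ℝ := t * Real.log (2 * Real.sin t) - qI c t

lemma sin_pos' (t : ℝ) (h0 : 0 < t) (h1 : t ≤ Real.pi / 4) : 0 < Real.sin t :=
  Real.sin_pos_of_pos_of_lt_pi h0 (by linarith [Real.pi_pos])

lemma gg_cont (c : ℝ) : ContinuousOn (gg c) (Set.Icc 0 (Real.pi / 4)) := by
  have hpos : ∀ t ∈ Set.Icc 0 (Real.pi / 4), 0 < Real.sinc t := by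
    intro t ht
    rcases eq_or_lt_of_le ht.1 with h | h
    · rw [← h]; simp
    · rw [Real.sinc_of_ne_zero h.ne']
      exact div_pos (sin_pos' t h ht.2) h
  have hc : ContinuousOn (fun t => (t * Real.log t + t * Real.log (2 * Real.sinc t)) - qI c t)
      (Set.Icc 0 (Real.pi / 4)) := by
    apply ContinuousOn.sub
    · apply ContinuousOn.add Real.continuous_mul_log.continuousOn
      apply continuousOn_id.mul
      apply ContinuousOn.log
      · exact (continuous_const.mul Real.continuous_sinc).continuousOn
      · intro t ht
        have := hpos t ht
        positivity
    · unfold qI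
      fun_prop
  refine hc.congr ?_
  intro t ht
  unfold gg
  rcases eq_or_lt_of_le ht.1 with h | h
  · rw [← h]; simp
  · have h2 := hpos t ht
    have : Real.sin t = t * Real.sinc t := by
      rw [Real.sinc_of_ne_zero h.ne']; field_simp
    rw [this, show 2 * (t * Real.sinc t) = t * (2 * Real.sinc t) by ring,
      Real.log_mul h.ne' (by positivity)]
    ring

lemma gg_deriv (c t : ℝ) (h : 0 < Real.sin t) :
    HasDerivAt (gg c) (Real.log (2 * Real.sin t) + t * Real.cos t / Real.sin t - qq c t) t := by
  have h1 : HasDerivAt (fun t => Real.log (2 * Real.sin t))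
      (2 * Real.cos t / (2 * Real.sin t)) t :=
    ((Real.hasDerivAt_sin t).const_mul 2).log (by positivity)
  have h2 := (hasDerivAt_id t).mul h1
  have hp : ∀ n : ℕ, HasDerivAt (fun t : ℝ => t ^ n) (n * t ^ (n - 1)) t := fun n => hasDerivAt_pow n t
  have h3 : HasDerivAt (qI c) (qq c t) t := by
    have := ((((((hasDerivAt_id t).sub ((hp 3).div_const 9)).sub ((hp 5).div_const 225)).sub
      (((hp 7).const_mul 2).div_const 6615)).sub ((hp 9).div_const 42525)).sub
      (((hp 11).const_mul 2).div_const 1029105)).sub (((hp 13).const_mul c).div_const 13)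
    refine this.congr_deriv ?_
    unfold qq
    push_cast
    ring
  refine (h2.sub h3).congr_deriv ?_
  simp only [id]
  field_simp

lemma log_int : IntegrableOn (fun t => Real.log |2 * Real.sin t|) (Set.Icc 0 (Real.pi / 4)) := by
  have h : IntervalIntegrable (fun t => Real.log 2 + Real.log (Real.sin t)) volume 0 (Real.pi / 4) :=
    intervalIntegrable_const.add intervalIntegrable_log_sin
  rw [intervalIntegrable_iff_integrableOn_Ioc_of_le (by positivity)] at h
  rw [integrableOn_Icc_iff_integrableOn_Ioc]
  refine h.congr_fun ?_ measurableSet_Ioc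
  intro t ht
  have := sin_pos' t ht.1 ht.2
  simp only [Real.log_abs]
  rw [Real.log_mul (by norm_num) this.ne']

lemma gg_end (c : ℝ) : gg c (Real.pi / 4) - gg c 0 = Real.pi * Real.log 2 / 8 - qI c (Real.pi / 4) := by
  unfold gg
  have : 2 * Real.sin (Real.pi / 4) = Real.sqrt 2 := by rw [Real.sin_pi_div_four]; ring
  rw [this, Real.log_sqrt (by norm_num)]
  simp [qI]
  ring

lemma lob_upper : lob (Real.pi / 4) ≤ qI 0 (Real.pi / 4) - Real.pi * Real.log 2 / 8 := by
  have := intervalIntegral.sub_le_integral_of_hasDeriv_right_of_le (a := 0) (b := Real.pi / 4)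
    (by positivity) (gg_cont 0)
    (fun t ht => (gg_deriv 0 t (sin_pos' t ht.1 ht.2.le)).hasDerivWithinAt) log_int
    (by
      intro t ht
      have hs := sin_pos' t ht.1 ht.2.le
      have := upper_cot t ht.1.le (ht.2.le.trans pi4_le)
      rw [← div_le_iff₀ hs] at this
      rw [Real.log_abs]
      linarith)
  rw [gg_end] at this
  unfold lob
  linarith

lemma lob_lower :
    qI (24 / 10000000) (Real.pi / 4) - Real.pi * Real.log 2 / 8 ≤ lob (Real.pi / 4) := by
  have := intervalIntegral.integral_le_sub_of_hasDeriv_right_of_le (a := 0) (b := Real.pi / 4)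
    (by positivity) (gg_cont (24 / 10000000))
    (fun t ht => (gg_deriv _ t (sin_pos' t ht.1 ht.2.le)).hasDerivWithinAt) log_int
    (by
      intro t ht
      have hs := sin_pos' t ht.1 ht.2.le
      have := lower_cot t ht.1.le (ht.2.le.trans pi4_le)
      rw [← le_div_iff₀ hs] at this
      rw [Real.log_abs]
      linarith)
  rw [gg_end] at this
  unfold lob
  linarith

lemma voct_num (c x l : ℝ) (hc0 : 0 ≤ c) (hc : c ≤ 24 / 10000000)
    (h1 : 0.7853981633974 < x) (h2 : x < 0.7853981633975)
    (h3 : 0.6931471803 < l) (h4 : l < 0.6931471808) :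
    3.663862 < 8 * (qI c x - x * l / 2) ∧ 8 * (qI c x - x * l / 2) < 3.663864 := by
  have hx : 0 < x := by linarith
  have lo : ∀ n : ℕ, (0.7853981633974 : ℝ) ^ n ≤ x ^ n := fun n => by gcongr
  have up : ∀ n : ℕ, x ^ n ≤ (0.7853981633975 : ℝ) ^ n := fun n => by gcongr
  have m1 : 0.7853981633974 * 0.6931471803 ≤ x * l := by gcongr
  have m2 : x * l ≤ 0.7853981633975 * 0.6931471808 := by gcongr
  have c1 : 0 ≤ c * x ^ 13 := by positivity
  have c2 : c * x ^ 13 ≤ 24 / 10000000 * (0.7853981633975 : ℝ) ^ 13 := by gcongr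
  have l3 := lo 3
  have l5 := lo 5
  have l7 := lo 7
  have l9 := lo 9
  have l11 := lo 11
  have u3 := up 3
  have u5 := up 5
  have u7 := up 7
  have u9 := up 9
  have u11 := up 11
  clear lo up
  unfold qI
  norm_num at *
  constructor <;> linarith

/-- The volume `v_oct = 8Λ(π/4)` of the regular ideal octahedron satisfies
`|8Λ(π/4) − 3.663863| < 10⁻⁶`. -/
theorem voct_approx : |8 * lob (Real.pi / 4) - 3.663863| < 1 / 1000000 := by
  have e : Real.pi * Real.log 2 / 8 = Real.pi / 4 * Real.log 2 / 2 := by ring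
  have hu := lob_upper
  have hl := lob_lower
  rw [e] at hu hl
  have p1 := Real.pi_gt_d20
  have p2 := Real.pi_lt_d20
  have n1 := (voct_num (24 / 10000000) (Real.pi / 4) (Real.log 2) (by norm_num) (by norm_num)
    (by linarith) (by linarith) Real.log_two_gt_d9 Real.log_two_lt_d9).1
  have n2 := (voct_num 0 (Real.pi / 4) (Real.log 2) (by norm_num) (by norm_num)
    (by linarith) (by linarith) Real.log_two_gt_d9 Real.log_two_lt_d9).2
  rw [abs_lt]
  constructor <;> linarith
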